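/- arXiv:0804.0758 — 7 statements merged into one kernel-verified Lean document; each statement's English description precedes it below -/
import Mathlib

section
/- Let m ≥ 1, let U ⊆ ℝ^m be open, and let σ : U → M_m(ℝ) be differentiable with σ(x) invertible for every x ∈ U. Then the following two conditions are equivalent at every x ∈ U: (a) for all i ∈ {1,…,m} and all j, k ∈ {1,…,m} with k > j, ∑_{l=1}^m (∂σ_{ik}/∂x_l)(x) σ_{lj}(x) = ∑_{l=1}^m (∂σ_{ij}/∂x_l)(x) σ_{lk}(x); (b) for all i, j, k ∈ {1,…,m}, ∂[σ(x)^{-1}]_{ij}/∂x_k = ∂[σ(x)^{-1}]_{ik}/∂x_j. -/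
/-- Partial derivative of a scalar function on `Fin m → ℝ` in the `k`-th coordinate
direction. -/
noncomputable def pderiv1 {m : ℕ} (f : (Fin m → ℝ) → ℝ) (k : Fin m) (x : Fin m → ℝ) : ℝ :=
  fderiv ℝ f x (Pi.single k 1)

theorem aux_det_diff {m : ℕ} {A : (Fin m → ℝ) → Matrix (Fin m) (Fin m) ℝ} {x : Fin m → ℝ}
    (h : ∀ i j, DifferentiableAt ℝ (fun y => A y i j) x) :
    DifferentiableAt ℝ (fun y => (A y).det) x := by
  simp only [Matrix.det_apply']
  refine DifferentiableAt.fun_sum fun p _ => ?_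
  refine DifferentiableAt.const_mul ?_ _
  exact (HasFDerivAt.finsetProd (u := Finset.univ) (g := fun i y => A y (p i) i)
    fun i _ => (h (p i) i).hasFDerivAt).differentiableAt

theorem aux_inv_diff {m : ℕ} {A : (Fin m → ℝ) → Matrix (Fin m) (Fin m) ℝ} {x : Fin m → ℝ}
    (h : ∀ i j, DifferentiableAt ℝ (fun y => A y i j) x) (hu : IsUnit (A x)) (i j : Fin m) :
    DifferentiableAt ℝ (fun y => (A y)⁻¹ i j) x := by
  have hd : (A x).det ≠ 0 := ((Matrix.isUnit_iff_isUnit_det _).1 hu).ne_zero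
  simp only [Matrix.inv_def, Matrix.smul_apply, smul_eq_mul, Ring.inverse_eq_inv',
    Matrix.adjugate_apply]
  refine DifferentiableAt.mul ((aux_det_diff h).inv hd) (aux_det_diff fun a b => ?_)
  by_cases hab : a = j
  · subst hab
    simp [Matrix.updateRow_self]
  · simpa [Matrix.updateRow_ne hab] using h a b

theorem aux_rel {m : ℕ} {A B : (Fin m → ℝ) → Matrix (Fin m) (Fin m) ℝ} {x : Fin m → ℝ}
    (hA : ∀ i j, DifferentiableAt ℝ (fun y => A y i j) x)
    (hB : ∀ i j, DifferentiableAt ℝ (fun y => B y i j) x)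
    (h1 : ∀ᶠ y in nhds x, B y * A y = 1) (l : Fin m) :
    (Matrix.of fun i j => pderiv1 (fun y => B y i j) l x) * A x
      + B x * (Matrix.of fun i j => pderiv1 (fun y => A y i j) l x) = 0 := by
  ext i j
  have e : (fun y => ∑ k, B y i k * A y k j) =ᶠ[nhds x]
      fun _ => (1 : Matrix (Fin m) (Fin m) ℝ) i j := by
    filter_upwards [h1] with y hy
    rw [← hy, Matrix.mul_apply]
  have e2 := e.fderiv_eq (𝕜 := ℝ)
  rw [fderiv_fun_sum (𝕜 := ℝ) (A := fun k y => B y i k * A y k j)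
    (fun k _ => (hB i k).mul (hA k j))] at e2
  have e3 := congrArg (fun L : (Fin m → ℝ) →L[ℝ] ℝ => L (Pi.single l (1 : ℝ))) e2
  simp only [fderiv_fun_mul (hB _ _) (hA _ _)] at e3
  simp [Finset.sum_add_distrib] at e3
  simp only [Matrix.add_apply, Matrix.mul_apply, Matrix.of_apply, Matrix.zero_apply, pderiv1]
  rw [← e3, add_comm]
  congr 1
  exact Finset.sum_congr rfl fun k _ => mul_comm _ _

theorem aux_alg {m : ℕ} {S T : Matrix (Fin m) (Fin m) ℝ}
    {D E : Fin m → Matrix (Fin m) (Fin m) ℝ}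
    (hD : ∀ l, D l = - (S * E l * S))
    (h : ∀ a b l, E l a b = E b a l) (i j k : Fin m) :
    ∑ l, D l i k * S l j = ∑ l, D l i j * S l k := by
  have key : ∀ j k, ∑ l, D l i k * S l j
      = - ∑ l, ∑ b, ∑ a, S i a * E l a b * S b k * S l j := by
    intro j k
    rw [← Finset.sum_neg_distrib]
    refine Finset.sum_congr rfl fun l _ => ?_
    rw [hD]
    simp [Matrix.mul_apply, Finset.sum_mul]
  rw [key, key, Finset.sum_comm]
  congr 1
  refine Finset.sum_congr rfl fun l _ => Finset.sum_congr rfl fun b _ =>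
    Finset.sum_congr rfl fun a _ => ?_
  rw [h a l b]; ring

theorem aux_alg2 {m : ℕ} {S T : Matrix (Fin m) (Fin m) ℝ}
    {D E : Fin m → Matrix (Fin m) (Fin m) ℝ}
    (hST : S * T = 1) (hE : ∀ l, E l = - (T * D l * T))
    (h : ∀ i j k, ∑ l, D l i k * S l j = ∑ l, D l i j * S l k) (a b l : Fin m) :
    E l a b = E b a l := by
  have hG : ∀ l i k, D l i k = ∑ j, (∑ p, D p i k * S p j) * T j l := by
    intro l i k
    simp only [Finset.sum_mul, mul_assoc]
    rw [Finset.sum_comm]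
    simp only [← Finset.mul_sum, ← Matrix.mul_apply, hST]
    simp [Matrix.one_apply]
  have key : ∀ b l, E l a b
      = - ∑ k, ∑ j, ∑ i, T a i * (∑ p, D p i k * S p j) * T j l * T k b := by
    intro b l
    rw [hE, Matrix.neg_apply, Matrix.mul_apply]
    congr 1
    refine Finset.sum_congr rfl fun k _ => ?_
    rw [Matrix.mul_apply, Finset.sum_mul, Finset.sum_comm]
    refine Finset.sum_congr rfl fun i _ => ?_
    rw [hG l i k, Finset.mul_sum, Finset.sum_mul]
    refine Finset.sum_congr rfl fun j _ => ?_
    ring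
  rw [key, key, Finset.sum_comm]
  congr 1
  refine Finset.sum_congr rfl fun k _ => Finset.sum_congr rfl fun j _ =>
    Finset.sum_congr rfl fun i _ => ?_
  rw [h i k j]; ring

/-- Equivalence of conditions (9) and (10) in Proposition 1 of the paper: for a
differentiable, pointwise invertible matrix field `σ` on an open set `U ⊆ ℝ^m`, the
condition `∑_l (∂σ_{ik}/∂x_l) σ_{lj} = ∑_l (∂σ_{ij}/∂x_l) σ_{lk}` (for `k > j`) is
equivalent, at every point of `U`, to `∂[σ⁻¹]_{ij}/∂x_k = ∂[σ⁻¹]_{ik}/∂x_j`. -/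
theorem condition_nine_iff_condition_ten
    (m : ℕ) (hm : 1 ≤ m) (U : Set (Fin m → ℝ)) (hUopen : IsOpen U)
    (σ : (Fin m → ℝ) → Matrix (Fin m) (Fin m) ℝ)
    (hσdiff : ∀ i j : Fin m, DifferentiableOn ℝ (fun x => σ x i j) U)
    (hσinv : ∀ x ∈ U, IsUnit (σ x)) :
    ∀ x ∈ U,
      ((∀ i j k : Fin m, j < k →
          ∑ l : Fin m, pderiv1 (fun x => σ x i k) l x * σ x l j =
            ∑ l : Fin m, pderiv1 (fun x => σ x i j) l x * σ x l k) ↔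
        (∀ i j k : Fin m,
          pderiv1 (fun x => (σ x)⁻¹ i j) k x = pderiv1 (fun x => (σ x)⁻¹ i k) j x)) := by
  intro x hx
  have hA : ∀ i j, DifferentiableAt ℝ (fun y => σ y i j) x := fun i j =>
    (hσdiff i j).differentiableAt (hUopen.mem_nhds hx)
  have hB : ∀ i j, DifferentiableAt ℝ (fun y => (σ y)⁻¹ i j) x :=
    aux_inv_diff hA (hσinv x hx)
  have h1 : ∀ᶠ y in nhds x, (σ y)⁻¹ * σ y = 1 := by
    filter_upwards [hUopen.mem_nhds hx] with y hy
    exact Matrix.nonsing_inv_mul _ ((Matrix.isUnit_iff_isUnit_det _).1 (hσinv y hy))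
  have hrel := aux_rel (B := fun y => (σ y)⁻¹) hA hB h1
  have hTS : (σ x)⁻¹ * σ x = 1 := h1.self_of_nhds
  have hST : σ x * (σ x)⁻¹ = 1 := mul_eq_one_comm.1 hTS
  set D : Fin m → Matrix (Fin m) (Fin m) ℝ :=
    fun l => Matrix.of fun i j => pderiv1 (fun y => σ y i j) l x with hDdef
  set E : Fin m → Matrix (Fin m) (Fin m) ℝ :=
    fun l => Matrix.of fun i j => pderiv1 (fun y => (σ y)⁻¹ i j) l x with hEdef
  have hr : ∀ l, E l * σ x + (σ x)⁻¹ * D l = 0 := hrel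
  have hD : ∀ l, D l = - (σ x * E l * σ x) := by
    intro l
    rw [mul_assoc, eq_neg_of_add_eq_zero_left (hr l), mul_neg, neg_neg, ← mul_assoc, hST,
      one_mul]
  have hE : ∀ l, E l = - ((σ x)⁻¹ * D l * (σ x)⁻¹) := by
    intro l
    rw [eq_neg_of_add_eq_zero_right (hr l), neg_mul, neg_neg, mul_assoc, hST, mul_one]
  constructor
  · intro h i j k
    refine aux_alg2 (D := D) (E := E) hST hE (fun i j k => ?_) i j k
    rcases lt_trichotomy j k with hjk | hjk | hjk
    · exact h i j k hjk
    · rw [hjk]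
    · exact (h i k j hjk).symm
  · intro h i j k _
    exact aux_alg (T := (σ x)⁻¹) (D := D) (E := E) hD (fun a b l => h a b l) i j k
end

section
/- Let a, b, c : ℝ → ℝ be C^∞ functions with a(x₁) ≠ 0 and c(x₂) ≠ 0 for all x₁, x₂ ∈ ℝ, and define σ : ℝ² → M₂(ℝ) by σ(x₁,x₂) = [[a(x₁), a(x₁)b(x₂)],[0, c(x₂)]]. Then σ(x) is invertible for every x ∈ ℝ², σ(x)^{-1} = [[1/a(x₁), −b(x₂)/c(x₂)],[0, 1/c(x₂)]], and condition (R) holds: for all x ∈ ℝ² and all i, j, k ∈ {1,2}, ∂[σ(x)^{-1}]_{ij}/∂x_k = ∂[σ(x)^{-1}]_{ik}/∂x_j. -/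
/-- Partial derivative of a scalar function on `Fin 2 → ℝ` in the `k`-th coordinate
direction. -/
noncomputable def pderiv3 (f : (Fin 2 → ℝ) → ℝ) (k : Fin 2) (x : Fin 2 → ℝ) : ℝ :=
  fderiv ℝ f x (Pi.single k 1)

theorem pderiv3_comp_zero (g : ℝ → ℝ) (hg : Differentiable ℝ g) (p k : Fin 2) (hpk : p ≠ k)
    (x : Fin 2 → ℝ) : pderiv3 (fun x => g (x p)) k x = 0 := by
  unfold pderiv3
  have h1 : HasFDerivAt (fun x : Fin 2 → ℝ => x p)
      (ContinuousLinearMap.proj (R := ℝ) (φ := fun _ : Fin 2 => ℝ) p) x :=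
    (ContinuousLinearMap.proj (R := ℝ) (φ := fun _ : Fin 2 => ℝ) p).hasFDerivAt
  have h2 := (hg (x p)).hasDerivAt.comp_hasFDerivAt x h1
  have h3 : fderiv ℝ (fun x : Fin 2 → ℝ => g (x p)) x = _ := h2.fderiv
  rw [h3]
  simp [hpk]

/-- The triangular stochastic volatility specification of Section 3 of the paper is
reducible: with `σ(x) = [[a(x₁), a(x₁)b(x₂)], [0, c(x₂)]]` for smooth `a, b, c` with
`a, c` nonvanishing, `σ(x)` is invertible with the stated explicit inverse, and the
reducibility condition (R) holds everywhere. -/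
theorem triangular_stochastic_volatility_reducible
    (a b c : ℝ → ℝ)
    (ha : ContDiff ℝ (⊤ : ℕ∞) a) (hb : ContDiff ℝ (⊤ : ℕ∞) b) (hc : ContDiff ℝ (⊤ : ℕ∞) c)
    (hane : ∀ x₁ : ℝ, a x₁ ≠ 0) (hcne : ∀ x₂ : ℝ, c x₂ ≠ 0)
    (σ : (Fin 2 → ℝ) → Matrix (Fin 2) (Fin 2) ℝ)
    (hσ : ∀ x, σ x = !![a (x 0), a (x 0) * b (x 1); 0, c (x 1)]) :
    (∀ x : Fin 2 → ℝ, IsUnit (σ x)) ∧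
    (∀ x : Fin 2 → ℝ,
      (σ x)⁻¹ = !![1 / a (x 0), -(b (x 1)) / c (x 1); 0, 1 / c (x 1)]) ∧
    (∀ x : Fin 2 → ℝ, ∀ i j k : Fin 2,
      pderiv3 (fun x => (σ x)⁻¹ i j) k x = pderiv3 (fun x => (σ x)⁻¹ i k) j x) := by
  have hda : Differentiable ℝ a := ha.differentiable (by simp)
  have hdb : Differentiable ℝ b := hb.differentiable (by simp)
  have hdc : Differentiable ℝ c := hc.differentiable (by simp)
  have hdet : ∀ x, IsUnit (σ x).det := by
    intro x
    rw [hσ, Matrix.det_fin_two_of]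
    simp [hane, hcne]
  have hinv : ∀ x : Fin 2 → ℝ,
      (σ x)⁻¹ = !![1 / a (x 0), -(b (x 1)) / c (x 1); 0, 1 / c (x 1)] := by
    intro x
    have h1 := hane (x 0)
    have h2 := hcne (x 1)
    apply Matrix.inv_eq_right_inv
    rw [hσ, Matrix.mul_fin_two, Matrix.one_fin_two]
    congr 3 <;> field_simp <;> simp [h1, h2]
  refine ⟨fun x => (Matrix.isUnit_iff_isUnit_det _).2 (hdet x), hinv, ?_⟩
  intro x i j k
  have e1 := pderiv3_comp_zero (fun t => 1 / a t)
    (fun t => (differentiableAt_const _).div (hda t) (hane t)) 0 1 (by decide) x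
  have e2 := pderiv3_comp_zero (fun t => -(b t) / c t)
    (fun t => (hdb t).neg.div (hdc t) (hcne t)) 1 0 (by decide) x
  have e3 := pderiv3_comp_zero (fun t => 1 / c t)
    (fun t => (differentiableAt_const _).div (hdc t) (hcne t)) 1 0 (by decide) x
  have e4 : pderiv3 (fun _ => (0 : ℝ)) 1 x = 0 := by simp [pderiv3]
  simp only [hinv]
  fin_cases i <;> fin_cases j <;> fin_cases k
  · rfl
  · exact e1.trans e2.symm
  · exact e2.trans e1.symm
  · rfl
  · rfl
  · exact e4.trans e3.symm
  · exact e3.trans e4.symm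
  · rfl
end

section
/- Let m ≥ 1, y₀ ∈ ℝ^m, and let μ : ℝ^m → ℝ^m be continuously differentiable. Define C : ℝ^m → ℝ by C(y) = ∑_{i=1}^m (y_i − y_{0i}) ∫₀¹ μ_i(y₀ + u(y − y₀)) du. Then C is differentiable and for every y ∈ ℝ^m, ⟨∇C(y), y − y₀⟩ = ⟨μ(y), y − y₀⟩, i.e., ∑_{i=1}^m (∂C/∂y_i)(y)(y_i − y_{0i}) = ∑_{i=1}^m μ_i(y)(y_i − y_{0i}). -/
open scoped RealInnerProductSpace

theorem line_aux_diff {E : Type*} [NormedAddCommGroup E] [NormedSpace ℝ E] [ProperSpace E]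
    (f : E → ℝ) (hf : ContDiff ℝ 1 f) (y₀ : E) :
    Differentiable ℝ (fun y => ∫ u in (0:ℝ)..1, f (y₀ + u • (y - y₀))) := by
  intro x
  have hc : Continuous f := hf.continuous
  have hd : Continuous (fderiv ℝ f) := hf.continuous_fderiv (by simp)
  have hG : Continuous (fun p : E × ℝ => p.2 • fderiv ℝ f (y₀ + p.2 • (p.1 - y₀))) := by
    fun_prop
  obtain ⟨K, hK⟩ := ((isCompact_closedBall x 1).prod
    (isCompact_Icc (a := (0:ℝ)) (b := 1))).exists_bound_of_continuousOn hG.continuousOn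
  have key := intervalIntegral.hasFDerivAt_integral_of_dominated_of_fderiv_le
    (𝕜 := ℝ) (μ := MeasureTheory.volume) (a := 0) (b := 1) (bound := fun _ => K)
    (F := fun y u => f (y₀ + u • (y - y₀)))
    (F' := fun y u => u • fderiv ℝ f (y₀ + u • (y - y₀))) (x₀ := x)
    (Metric.closedBall_mem_nhds x one_pos)
    (Filter.Eventually.of_forall fun y =>
      (show Continuous fun u : ℝ => f (y₀ + u • (y - y₀)) by fun_prop).aestronglyMeasurable)
    ((show Continuous fun u : ℝ => f (y₀ + u • (x - y₀)) by fun_prop).intervalIntegrable _ _)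
    (show Continuous fun u : ℝ => u • fderiv ℝ f (y₀ + u • (x - y₀)) by
      fun_prop).aestronglyMeasurable
    (Filter.Eventually.of_forall fun u hu y hy => by
      rw [Set.uIoc_of_le zero_le_one] at hu
      exact hK (y, u) ⟨hy, hu.1.le, hu.2⟩)
    (by simp)
    (Filter.Eventually.of_forall fun u hu y hy => by
      have h1 : HasFDerivAt (fun y : E => y₀ + u • (y - y₀))
          (u • ContinuousLinearMap.id ℝ E) y :=
        (((hasFDerivAt_id y).sub_const y₀).const_smul u).const_add y₀
      have h2 := ((hf.differentiable (by simp)) (y₀ + u • (y - y₀))).hasFDerivAt.comp y h1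
      have h3 : fderiv ℝ f (y₀ + u • (y - y₀)) ∘SL (u • ContinuousLinearMap.id ℝ E) =
          u • fderiv ℝ f (y₀ + u • (y - y₀)) := by
        ext v
        simp
      rw [h3] at h2
      exact h2)
  exact key.differentiableAt

theorem line_integral_coefficient_solves_first_order_equation
    (m : ℕ) (hm : 1 ≤ m) (y₀ : EuclideanSpace ℝ (Fin m))
    (μ : EuclideanSpace ℝ (Fin m) → EuclideanSpace ℝ (Fin m))
    (hμ : ContDiff ℝ 1 μ)
    (C : EuclideanSpace ℝ (Fin m) → ℝ)
    (hC : ∀ y, C y = ∑ i : Fin m,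
      (y i - y₀ i) * ∫ u in (0:ℝ)..1, μ (y₀ + u • (y - y₀)) i) :
    Differentiable ℝ C ∧
    ∀ y, ⟪gradient C y, y - y₀⟫ = ⟪μ y, y - y₀⟫ := by
  have hμi : ∀ i, ContDiff ℝ 1 (fun x => μ x i) := contDiff_euclidean.1 hμ
  have hCe : C = fun y => ∑ i : Fin m,
      (y i - y₀ i) * ∫ u in (0:ℝ)..1, μ (y₀ + u • (y - y₀)) i := funext hC
  have hdiff : Differentiable ℝ C := by
    rw [hCe]
    refine Differentiable.fun_sum fun i _ => Differentiable.mul ?_ (line_aux_diff _ (hμi i) y₀)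
    fun_prop
  refine ⟨hdiff, fun y => ?_⟩
  rw [inner_gradient_left]
  set v := y - y₀ with hv
  have h1 : HasDerivAt (fun t : ℝ => C (y₀ + t • v)) (fderiv ℝ C y v) 1 := by
    have hl : HasDerivAt (fun t : ℝ => y₀ + t • v) v 1 := by
      simpa using ((hasDerivAt_id (1:ℝ)).smul_const v).const_add y₀
    have hy : y₀ + (1:ℝ) • v = y := by simp [hv]
    have h3 := (hdiff (y₀ + (1:ℝ) • v)).hasFDerivAt.comp_hasDerivAt (1:ℝ) hl
    rw [hy] at h3
    exact h3
  have h2 : HasDerivAt (fun t : ℝ => C (y₀ + t • v)) (∑ i, v i * μ y i) 1 := by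
    have he : (fun t : ℝ => C (y₀ + t • v)) =
        fun t => ∑ i, v i * ∫ s in (0:ℝ)..t, μ (y₀ + s • v) i := by
      funext t
      rw [hC]
      refine Finset.sum_congr rfl fun i _ => ?_
      have := intervalIntegral.mul_integral_comp_mul_right (a := 0) (b := 1)
        (f := fun s => μ (y₀ + s • v) i) (c := t)
      rw [zero_mul, one_mul] at this
      rw [← this]
      simp only [add_sub_cancel_left, smul_smul, PiLp.add_apply, PiLp.smul_apply, smul_eq_mul]
      ring
    rw [he]
    refine HasDerivAt.fun_sum fun i _ => HasDerivAt.const_mul _ ?_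
    have hc : Continuous fun s : ℝ => μ (y₀ + s • v) i := by
      have := (hμi i).continuous
      exact this.comp (by fun_prop : Continuous fun s : ℝ => y₀ + s • v)
    have h4 := (hc.integral_hasStrictDerivAt 0 1).hasDerivAt
    have hy : y₀ + (1:ℝ) • v = y := by simp [hv]
    rw [hy] at h4
    exact h4
  rw [h1.unique h2, PiLp.inner_apply]
  simp
end

section
/- Let m ≥ 1, y₀ ∈ ℝ^m, k ≥ 1 an integer, and let G : ℝ^m → ℝ be continuously differentiable. Define C : ℝ^m → ℝ by C(y) = k ∫₀¹ G(y₀ + u(y − y₀)) u^{k−1} du. Then C is differentiable and for every y ∈ ℝ^m, C(y) + (1/k)⟨∇C(y), y − y₀⟩ = G(y). -/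
open scoped RealInnerProductSpace

/-- Verification of the radial-integral formula (22) of the paper: for `k ≥ 1`,
`C(y) = k ∫₀¹ G(y₀ + u(y − y₀)) u^{k−1} du` is differentiable and solves
`C(y) + (1/k)⟨∇C(y), y − y₀⟩ = G(y)`. -/
theorem radial_integral_coefficient_solves_equation
    (m : ℕ) (hm : 1 ≤ m) (y₀ : EuclideanSpace ℝ (Fin m))
    (k : ℕ) (hk : 1 ≤ k)
    (G : EuclideanSpace ℝ (Fin m) → ℝ) (hG : ContDiff ℝ 1 G)
    (C : EuclideanSpace ℝ (Fin m) → ℝ)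
    (hC : ∀ y, C y = (k : ℝ) * ∫ u in (0:ℝ)..1, G (y₀ + u • (y - y₀)) * u ^ (k - 1)) :
    Differentiable ℝ C ∧
    ∀ y, C y + (1 / (k : ℝ)) * ⟪gradient C y, y - y₀⟫ = G y := by
  have hGd : Differentiable ℝ G := hG.differentiable (by norm_num)
  have hGc : Continuous G := hG.continuous
  have hG' : Continuous (fderiv ℝ G) := hG.continuous_fderiv (by norm_num)
  have hk0 : (k : ℝ) ≠ 0 := by positivity
  let F' : EuclideanSpace ℝ (Fin m) → ℝ → EuclideanSpace ℝ (Fin m) →L[ℝ] ℝ :=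
    fun y u => (u ^ k) • fderiv ℝ G (y₀ + u • (y - y₀))
  have hF'c : Continuous (fun p : EuclideanSpace ℝ (Fin m) × ℝ => F' p.1 p.2) := by
    simp only [F']
    fun_prop
  have hF'c1 : ∀ y, Continuous (F' y) := fun y => by
    simp only [F']
    fun_prop
  have key : ∀ y, HasFDerivAt
      (fun y => ∫ u in (0:ℝ)..1, G (y₀ + u • (y - y₀)) * u ^ (k - 1))
      (∫ u in (0:ℝ)..1, F' y u) y := by
    intro y
    obtain ⟨B, hB⟩ := ((isCompact_closedBall y 1).prod
      (isCompact_Icc (a := (0:ℝ)) (b := 1))).exists_bound_of_continuousOn hF'c.continuousOn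
    refine intervalIntegral.hasFDerivAt_integral_of_dominated_of_fderiv_le
      (bound := fun _ => B) (Metric.closedBall_mem_nhds y one_pos) ?_ ?_ ?_ ?_ ?_ ?_
    · refine Filter.Eventually.of_forall fun x => Continuous.aestronglyMeasurable ?_
      fun_prop
    · apply Continuous.intervalIntegrable
      fun_prop
    · exact (hF'c1 y).aestronglyMeasurable
    · refine Filter.Eventually.of_forall fun t ht x hx => ?_
      rw [Set.uIoc_of_le zero_le_one] at ht
      exact hB (x, t) ⟨hx, ht.1.le, ht.2⟩
    · exact intervalIntegrable_const
    · refine Filter.Eventually.of_forall fun t ht x hx => ?_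
      have h1 : HasFDerivAt (fun x => y₀ + t • (x - y₀))
          (t • ContinuousLinearMap.id ℝ (EuclideanSpace ℝ (Fin m))) x :=
        (((hasFDerivAt_id x).sub_const y₀).const_smul t).const_add y₀
      have h2 := ((hGd (y₀ + t • (x - y₀))).hasFDerivAt.comp x h1).mul_const (t ^ (k - 1))
      refine h2.congr_fderiv ?_
      ext v
      obtain ⟨j, rfl⟩ : ∃ j, k = j + 1 := ⟨k - 1, by omega⟩
      simp [F', pow_succ]
      ring
  have hCe : C = fun y => (k : ℝ) * ∫ u in (0:ℝ)..1, G (y₀ + u • (y - y₀)) * u ^ (k - 1) :=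
    funext hC
  have hCd : ∀ y, HasFDerivAt C ((k : ℝ) • ∫ u in (0:ℝ)..1, F' y u) y := by
    intro y
    rw [hCe]
    exact (key y).const_mul _
  refine ⟨fun y => (hCd y).differentiableAt, fun y => ?_⟩
  have hg : ⟪gradient C y, y - y₀⟫ = fderiv ℝ C y (y - y₀) := by
    simp [gradient]
  have hi : IntervalIntegrable (F' y) MeasureTheory.volume 0 1 := (hF'c1 y).intervalIntegrable _ _
  rw [hg, (hCd y).fderiv, ContinuousLinearMap.smul_apply, smul_eq_mul, ← mul_assoc,
    one_div_mul_cancel hk0, one_mul, ContinuousLinearMap.intervalIntegral_apply hi, hC,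
    ← intervalIntegral.integral_const_mul, ← intervalIntegral.integral_add]
  · have hd : ∀ u ∈ Set.uIcc (0:ℝ) 1, HasDerivAt (fun u : ℝ => u ^ k * G (y₀ + u • (y - y₀)))
        ((k : ℝ) * (G (y₀ + u • (y - y₀)) * u ^ (k - 1)) + F' y u (y - y₀)) u := by
      intro u _
      have h1 : HasDerivAt (fun u : ℝ => y₀ + u • (y - y₀)) ((1:ℝ) • (y - y₀)) u :=
        ((hasDerivAt_id u).smul_const (y - y₀)).const_add y₀
      have h2 := (hGd (y₀ + u • (y - y₀))).hasFDerivAt.comp_hasDerivAt u h1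
      refine ((hasDerivAt_pow k u).mul h2).congr_deriv ?_
      simp only [F', one_smul, ContinuousLinearMap.smul_apply, smul_eq_mul, Function.comp]
      ring
    rw [intervalIntegral.integral_eq_sub_of_hasDerivAt hd]
    · have : k ≠ 0 := by omega
      simp [this]
    · apply Continuous.intervalIntegrable
      have := (hF'c1 y).clm_apply (continuous_const (y := y - y₀))
      fun_prop
  · apply Continuous.intervalIntegrable
    fun_prop
  · exact ((hF'c1 y).clm_apply continuous_const).intervalIntegrable _ _
end

section
/- Let β, σ be real 2×2 matrices with tr(β) ≠ 0 and det(β) ≠ 0, and define λ = (1/(2·tr(β)·det(β)))·(det(β)·σσᵀ + (β − tr(β)·I)·σσᵀ·(β − tr(β)·I)ᵀ), where I is the 2×2 identity matrix. Then λ is symmetric and satisfies the Lyapunov equation βλ + λβᵀ = σσᵀ. -/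
open Matrix

/-- The explicit stationary variance–covariance matrix (46) of the bivariate
Ornstein–Uhlenbeck model in Section 7.1 of the paper: for 2×2 matrices `β, σ` with
`tr β ≠ 0` and `det β ≠ 0`, the matrix
`λ = (1/(2 tr β det β))(det β · σσᵀ + (β − tr β · I) σσᵀ (β − tr β · I)ᵀ)` is symmetric
and solves the Lyapunov equation `βλ + λβᵀ = σσᵀ`. -/
theorem ou_stationary_covariance_solves_lyapunov
    (β σ lam : Matrix (Fin 2) (Fin 2) ℝ)
    (htr : Matrix.trace β ≠ 0) (hdet : Matrix.det β ≠ 0)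
    (hlam : lam = (1 / (2 * Matrix.trace β * Matrix.det β)) •
      (Matrix.det β • (σ * σᵀ) +
        (β - Matrix.trace β • (1 : Matrix (Fin 2) (Fin 2) ℝ)) * (σ * σᵀ) *
          (β - Matrix.trace β • (1 : Matrix (Fin 2) (Fin 2) ℝ))ᵀ)) :
    lamᵀ = lam ∧ β * lam + lam * βᵀ = σ * σᵀ := by
  have hS : (σ * σᵀ)ᵀ = σ * σᵀ := by simp
  have hCH : β * (β - Matrix.trace β • (1 : Matrix (Fin 2) (Fin 2) ℝ)) =
      -(Matrix.det β • (1 : Matrix (Fin 2) (Fin 2) ℝ)) := by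
    ext i j
    fin_cases i <;> fin_cases j <;>
      simp [Matrix.mul_apply, Fin.sum_univ_two, Matrix.trace_fin_two, Matrix.det_fin_two] <;> ring
  generalize σ * σᵀ = S at *
  obtain ⟨M, hM⟩ : ∃ M, M = β - Matrix.trace β • (1 : Matrix (Fin 2) (Fin 2) ℝ) := ⟨_, rfl⟩
  rw [← hM] at hlam hCH
  have hCT : Mᵀ * βᵀ = -(Matrix.det β • (1 : Matrix (Fin 2) (Fin 2) ℝ)) := by
    rw [← Matrix.transpose_mul, hCH]; simp
  have hb : β = M + Matrix.trace β • (1 : Matrix (Fin 2) (Fin 2) ℝ) := by rw [hM]; abel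
  have hbT : βᵀ = Mᵀ + Matrix.trace β • (1 : Matrix (Fin 2) (Fin 2) ℝ) := by
    conv_lhs => rw [hb]
    simp
  constructor
  · rw [hlam]
    simp [Matrix.transpose_mul, hS, Matrix.mul_assoc]
  · have h1 : β * (M * S * Mᵀ) = -(Matrix.det β • (S * Mᵀ)) := by
      rw [← Matrix.mul_assoc, ← Matrix.mul_assoc, hCH]; simp
    have h2 : M * S * Mᵀ * βᵀ = -(Matrix.det β • (M * S)) := by
      rw [Matrix.mul_assoc, hCT]; simp
    have h3 : β * S = M * S + Matrix.trace β • S := by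
      conv_lhs => rw [hb]
      simp [Matrix.add_mul]
    have h4 : S * βᵀ = S * Mᵀ + Matrix.trace β • S := by
      rw [hbT]; simp [Matrix.mul_add]
    rw [hlam, Matrix.mul_smul, Matrix.smul_mul, Matrix.mul_add, Matrix.add_mul, h1, h2,
      Matrix.mul_smul, Matrix.smul_mul, h3, h4]
    ext i j
    simp only [Matrix.add_apply, Matrix.smul_apply, Matrix.neg_apply, smul_eq_mul]
    field_simp
    ring
end

section
/- Let m ≥ 1, y₀ ∈ ℝ^m, and let μ : ℝ^m → ℝ^m be C². Define C⁻¹(y) = −(1/2)‖y − y₀‖², C⁰(y) = ∑_{i=1}^m (y_i − y_{0i}) ∫₀¹ μ_i(y₀ + u(y − y₀)) du, and for Δ > 0 set l(Δ, y) = −(m/2)·ln(2πΔ) + C⁻¹(y)/Δ + C⁰(y). Then for every Δ > 0 and every y ∈ ℝ^m, the forward-Kolmogorov residual F(Δ, y) := ∂l/∂Δ + ∑_{i=1}^m ∂μ_i/∂y_i(y) + ∑_{i=1}^m μ_i(y)·∂l/∂y_i − (1/2)∑_{i=1}^m ∂²l/∂y_i² − (1/2)∑_{i=1}^m (∂l/∂y_i)²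 does not depend on Δ: it equals ∑_{i=1}^m ∂μ_i/∂y_i(y) + ∑_{i=1}^m μ_i(y)·∂C⁰/∂y_i(y) − (1/2)∑_{i=1}^m (∂²C⁰/∂y_i²(y) + (∂C⁰/∂y_i(y))²). In particular, the coefficients of Δ^{-2} and Δ^{-1} in F vanish identically. -/
/-- Partial derivative of a scalar function on `EuclideanSpace ℝ (Fin m)` in the `i`-th
coordinate direction. -/
noncomputable def pd16 {m : ℕ} (f : EuclideanSpace ℝ (Fin m) → ℝ) (i : Fin m)
    (y : EuclideanSpace ℝ (Fin m)) : ℝ :=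
  fderiv ℝ f y (EuclideanSpace.single i 1)

open MeasureTheory in
theorem aux_hasFDerivAt {E G : Type} [NormedAddCommGroup E] [NormedSpace ℝ E] [ProperSpace E]
    [NormedAddCommGroup G] [NormedSpace ℝ G] (f : E × ℝ → G)
    (hf : ContDiff ℝ 1 f) (x₀ : E) :
    HasFDerivAt (fun x => ∫ t in (0:ℝ)..1, f (x, t))
      (∫ t in (0:ℝ)..1, (fderiv ℝ f (x₀, t)).comp (ContinuousLinearMap.inl ℝ E ℝ)) x₀ := by
  have hc : Continuous fun p : E × ℝ =>
      (fderiv ℝ f p).comp (ContinuousLinearMap.inl ℝ E ℝ) := by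
    have := hf.continuous_fderiv one_ne_zero
    fun_prop
  have hfc := hf.continuous
  have hK : IsCompact (Metric.closedBall x₀ 1 ×ˢ Set.Icc (0:ℝ) 1) :=
    (isCompact_closedBall x₀ 1).prod isCompact_Icc
  obtain ⟨C, hC⟩ := hK.exists_bound_of_continuousOn hc.continuousOn
  refine intervalIntegral.hasFDerivAt_integral_of_dominated_of_fderiv_le
    (F' := fun x t => (fderiv ℝ f (x, t)).comp (ContinuousLinearMap.inl ℝ E ℝ))
    (bound := fun _ => C) (Metric.closedBall_mem_nhds x₀ one_pos) ?_ ?_ ?_ ?_ ?_ ?_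
  · refine Filter.Eventually.of_forall fun x => ?_
    exact (show Continuous fun t => f (x, t) by fun_prop).aestronglyMeasurable
  · exact (show Continuous fun t => f (x₀, t) by fun_prop).intervalIntegrable _ _
  · exact (hc.comp (show Continuous fun t : ℝ => (x₀, t) by fun_prop)).aestronglyMeasurable
  · refine Filter.Eventually.of_forall fun t ht x hx => hC (x, t) ⟨hx, ?_⟩
    rw [Set.uIoc_of_le zero_le_one] at ht
    exact Set.Ioc_subset_Icc_self ht
  · exact intervalIntegrable_const
  · refine Filter.Eventually.of_forall fun t ht x hx => ?_
    have h1 := (hf.differentiable one_ne_zero (x, t)).hasFDerivAt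
    exact h1.comp x (hasFDerivAt_prodMk_left x t)

theorem aux_contDiff (n : ℕ) {E G : Type} [NormedAddCommGroup E] [NormedSpace ℝ E] [ProperSpace E]
    [NormedAddCommGroup G] [NormedSpace ℝ G] (f : E × ℝ → G)
    (hf : ContDiff ℝ n f) :
    ContDiff ℝ n (fun x => ∫ t in (0:ℝ)..1, f (x, t)) := by
  induction n generalizing G with
  | zero =>
    rw [Nat.cast_zero, contDiff_zero] at *
    exact intervalIntegral.continuous_parametric_intervalIntegral_of_continuous'
      (f := fun x t => f (x, t)) (by simpa [Function.uncurry_def] using hf) 0 1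
  | succ n ih =>
    rw [Nat.cast_succ] at hf
    rw [Nat.cast_succ, contDiff_succ_iff_hasFDerivAt]
    refine ⟨_, ?_, aux_hasFDerivAt f (hf.of_le (by simp))⟩
    refine ih (fun p => (fderiv ℝ f p).comp (ContinuousLinearMap.inl ℝ E ℝ)) ?_
    exact (hf.fderiv_right le_rfl).clm_comp contDiff_const

theorem aux_C0_contDiff (m : ℕ) (y₀ : EuclideanSpace ℝ (Fin m))
    (μ : EuclideanSpace ℝ (Fin m) → EuclideanSpace ℝ (Fin m)) (hμ : ContDiff ℝ 2 μ)
    (C0 : EuclideanSpace ℝ (Fin m) → ℝ)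
    (hC0 : ∀ y, C0 y = ∑ i : Fin m,
      (y i - y₀ i) * ∫ u in (0:ℝ)..1, μ (y₀ + u • (y - y₀)) i) : ContDiff ℝ 2 C0 := by
  rw [funext hC0]
  refine ContDiff.sum fun i _ => ContDiff.mul (by fun_prop) ?_
  exact aux_contDiff 2 (fun p : EuclideanSpace ℝ (Fin m) × ℝ => μ (y₀ + p.2 • (p.1 - y₀)) i)
    (by norm_num; fun_prop)

theorem aux_radial (m : ℕ) (y₀ : EuclideanSpace ℝ (Fin m))
    (μ : EuclideanSpace ℝ (Fin m) → EuclideanSpace ℝ (Fin m)) (hμ : ContDiff ℝ 2 μ)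
    (C0 : EuclideanSpace ℝ (Fin m) → ℝ)
    (hC0 : ∀ y, C0 y = ∑ i : Fin m,
      (y i - y₀ i) * ∫ u in (0:ℝ)..1, μ (y₀ + u • (y - y₀)) i)
    (y : EuclideanSpace ℝ (Fin m)) :
    ∑ i : Fin m, (y i - y₀ i) * pd16 C0 i y = ∑ i : Fin m, (y i - y₀ i) * μ y i := by
  have hd : DifferentiableAt ℝ C0 y :=
    (aux_C0_contDiff m y₀ μ hμ C0 hC0).differentiable two_ne_zero y
  have hμc := hμ.continuous
  have e : y - y₀ = ∑ i : Fin m, (y i - y₀ i) • EuclideanSpace.single i (1:ℝ) := by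
    ext j
    simp [Finset.sum_apply, Pi.single_apply]
  have h1 : ∑ i : Fin m, (y i - y₀ i) * pd16 C0 i y = fderiv ℝ C0 y (y - y₀) := by
    conv_rhs => rw [e]
    simp [pd16, map_sum]
  rw [h1]
  have hpath : HasDerivAt (fun t : ℝ => y₀ + t • (y - y₀)) (y - y₀) 1 := by
    simpa using ((hasDerivAt_id (1:ℝ)).smul_const (y - y₀)).const_add y₀
  have hA : HasDerivAt (fun t : ℝ => C0 (y₀ + t • (y - y₀))) (fderiv ℝ C0 y (y - y₀)) 1 := by
    have h2 : HasFDerivAt C0 (fderiv ℝ C0 y) (y₀ + (1:ℝ) • (y - y₀)) := by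
      simpa using hd.hasFDerivAt
    exact h2.comp_hasDerivAt 1 hpath
  have hB : (fun t : ℝ => C0 (y₀ + t • (y - y₀))) = fun t => ∑ i : Fin m,
      (y i - y₀ i) * ∫ u in (0:ℝ)..t, μ (y₀ + u • (y - y₀)) i := by
    funext t
    rw [hC0]
    refine Finset.sum_congr rfl fun i _ => ?_
    have := intervalIntegral.smul_integral_comp_mul_right
      (a := 0) (b := 1) (fun u : ℝ => μ (y₀ + u • (y - y₀)) i) t
    simp only [zero_mul, one_mul] at this
    rw [← this]
    simp [smul_smul]
    ring
  have hC : HasDerivAt (fun t : ℝ => C0 (y₀ + t • (y - y₀)))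
      (∑ i : Fin m, (y i - y₀ i) * μ y i) 1 := by
    rw [hB]
    refine HasDerivAt.fun_sum fun i _ => HasDerivAt.const_mul _ ?_
    have hc : Continuous fun u : ℝ => μ (y₀ + u • (y - y₀)) i := by fun_prop
    simpa using intervalIntegral.integral_hasDerivAt_right (hc.intervalIntegrable 0 1)
      (hc.stronglyMeasurableAtFilter _ _) hc.continuousAt
  exact hA.unique hC

theorem aux_coord (m : ℕ) (i : Fin m) (c : ℝ) (y : EuclideanSpace ℝ (Fin m)) :
    HasFDerivAt (fun y : EuclideanSpace ℝ (Fin m) => y i - c)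
      (EuclideanSpace.proj i : EuclideanSpace ℝ (Fin m) →L[ℝ] ℝ) y :=
  (EuclideanSpace.proj i : EuclideanSpace ℝ (Fin m) →L[ℝ] ℝ).hasFDerivAt.sub_const c

/-- The `K = 0` case of Theorem 1 of the paper: with `C⁻¹(y) = −(1/2)‖y−y₀‖²`,
`C⁰(y) = ∑_i (y_i−y_{0i}) ∫₀¹ μ_i(y₀+u(y−y₀)) du` and
`l(Δ,y) = −(m/2)ln(2πΔ) + C⁻¹(y)/Δ + C⁰(y)`, the residual `F(Δ,y)` of the logarithmic
Kolmogorov forward equation (18) does not depend on `Δ`: it equals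
`∑_i ∂μ_i/∂y_i + ∑_i μ_i ∂C⁰/∂y_i − (1/2)∑_i (∂²C⁰/∂y_i² + (∂C⁰/∂y_i)²)`. In
particular, the coefficients of `Δ^{-2}` and `Δ^{-1}` in `F` vanish identically. -/
theorem forward_residual_is_Delta_independent
    (m : ℕ) (hm : 1 ≤ m) (y₀ : EuclideanSpace ℝ (Fin m))
    (μ : EuclideanSpace ℝ (Fin m) → EuclideanSpace ℝ (Fin m)) (hμ : ContDiff ℝ 2 μ)
    (Cm C0 : EuclideanSpace ℝ (Fin m) → ℝ)
    (hCm : ∀ y, Cm y = -(1 / 2) * ‖y - y₀‖ ^ 2)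
    (hC0 : ∀ y, C0 y = ∑ i : Fin m,
      (y i - y₀ i) * ∫ u in (0:ℝ)..1, μ (y₀ + u • (y - y₀)) i)
    (l : ℝ → EuclideanSpace ℝ (Fin m) → ℝ)
    (hl : ∀ Δ y, l Δ y = -((m : ℝ) / 2) * Real.log (2 * Real.pi * Δ) + Cm y / Δ + C0 y)
    (F : ℝ → EuclideanSpace ℝ (Fin m) → ℝ)
    (hF : ∀ Δ y, F Δ y =
      deriv (fun t => l t y) Δ +
        (∑ i : Fin m, pd16 (fun y => μ y i) i y) +
        (∑ i : Fin m, μ y i * pd16 (l Δ) i y) -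
        (1 / 2) * ∑ i : Fin m, pd16 (pd16 (l Δ) i) i y -
        (1 / 2) * ∑ i : Fin m, (pd16 (l Δ) i y) ^ 2) :
    ∀ Δ : ℝ, 0 < Δ → ∀ y : EuclideanSpace ℝ (Fin m),
      F Δ y =
        (∑ i : Fin m, pd16 (fun y => μ y i) i y) +
          (∑ i : Fin m, μ y i * pd16 C0 i y) -
          (1 / 2) * ∑ i : Fin m, (pd16 (pd16 C0 i) i y + (pd16 C0 i y) ^ 2) := by
  intro Δ hΔ y
  have hΔ0 := hΔ.ne'
  have hC2 := aux_C0_contDiff m y₀ μ hμ C0 hC0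
  have hrad := aux_radial m y₀ μ hμ C0 hC0 y
  have hCd : Differentiable ℝ C0 := hC2.differentiable two_ne_zero
  have hCp : ∀ i, Differentiable ℝ (pd16 C0 i) := fun i => by
    have h := (hC2.fderiv_right (m := 1) (by norm_num)).differentiable one_ne_zero
    unfold pd16
    fun_prop
  have hp : ∀ i, pd16 (l Δ) i = fun y => -(1 / Δ) * (y i - y₀ i) + pd16 C0 i y := by
    intro i
    funext z
    have hn : HasFDerivAt (fun y => ‖y - y₀‖ ^ 2) (2 • innerSL ℝ (z - y₀)) z := by
      simpa using ((hasFDerivAt_id z).sub_const y₀).norm_sq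
    have hL : HasFDerivAt (l Δ)
        ((-(1 / 2) / Δ) • (2 • innerSL ℝ (z - y₀)) + fderiv ℝ C0 z) z := by
      have h := ((hn.const_mul (-(1 / 2) / Δ)).const_add
        (-((m : ℝ) / 2) * Real.log (2 * Real.pi * Δ))).add (hCd z).hasFDerivAt
      refine h.congr_of_eventuallyEq (Filter.Eventually.of_forall fun w => ?_)
      simp only [hl, hCm, Pi.add_apply]
      ring
    unfold pd16
    rw [hL.fderiv]
    simp [EuclideanSpace.inner_single_right]
    ring
  have hpp : ∀ i, pd16 (pd16 (l Δ) i) i y = -(1 / Δ) + pd16 (pd16 C0 i) i y := by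
    intro i
    rw [hp i]
    have h := ((aux_coord m i (y₀ i) y).const_mul (-(1 / Δ))).add (hCp i y).hasFDerivAt
    have h2 : fderiv ℝ (fun y => -(1 / Δ) * (y i - y₀ i) + pd16 C0 i y) y = _ := h.fderiv
    conv_lhs => unfold pd16
    change fderiv ℝ (fun y => -(1 / Δ) * (y i - y₀ i) + pd16 C0 i y) y _ = _
    rw [h2]
    simp
    rfl
  have hdt : deriv (fun t => l t y) Δ
      = -((m : ℝ) / 2) / Δ + (1 / 2) * (∑ i, (y i - y₀ i) ^ 2) / Δ ^ 2 := by
    have h1 : HasDerivAt (fun t : ℝ => Real.log (2 * Real.pi * t))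
        ((2 * Real.pi * 1) / (2 * Real.pi * Δ)) Δ :=
      ((hasDerivAt_id Δ).const_mul (2 * Real.pi)).log (by have := Real.pi_pos; simp; positivity)
    have h2 := ((h1.const_mul (-((m : ℝ) / 2))).add
      ((hasDerivAt_inv hΔ0).const_mul (Cm y))).add_const (C0 y)
    have h3 : (fun t => l t y) = _ := funext fun t => hl t y
    have h4 : deriv (fun t => l t y) Δ = -((m : ℝ) / 2) * (2 * Real.pi * 1 / (2 * Real.pi * Δ))
        + Cm y * -(Δ ^ 2)⁻¹ := by
      rw [h3]
      simp only [div_eq_mul_inv (Cm y)]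
      exact h2.deriv
    rw [h4, hCm, EuclideanSpace.norm_sq_eq]
    have := Real.pi_ne_zero
    simp
    field_simp
  rw [hF, hdt]
  simp only [hpp]
  simp only [hp]
  have e1 : ∑ i, μ y i * (-(1 / Δ) * (y i - y₀ i) + pd16 C0 i y)
      = -(1 / Δ) * ∑ i, (y i - y₀ i) * μ y i + ∑ i, μ y i * pd16 C0 i y := by
    rw [Finset.mul_sum, ← Finset.sum_add_distrib]
    exact Finset.sum_congr rfl fun i _ => by ring
  have e2 : ∑ i, (-(1 / Δ) * (y i - y₀ i) + pd16 C0 i y) ^ 2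
      = (1 / Δ ^ 2) * ∑ i, (y i - y₀ i) ^ 2 - (2 / Δ) * ∑ i, (y i - y₀ i) * pd16 C0 i y
        + ∑ i, (pd16 C0 i y) ^ 2 := by
    rw [Finset.mul_sum, Finset.mul_sum, ← Finset.sum_sub_distrib, ← Finset.sum_add_distrib]
    exact Finset.sum_congr rfl fun i _ => by ring
  rw [e1, e2, hrad, Finset.sum_add_distrib, Finset.sum_add_distrib]
  simp only [Finset.sum_const, Finset.card_univ, Fintype.card_fin, nsmul_eq_mul]
  ring
end

section
/- Let m ≥ 1, x₀ ∈ ℝ^m, let v : ℝ^m → M_m(ℝ) be continuous with v(x₀) symmetric and invertible, and let C : ℝ^m → ℝ be C² on a neighborhood of x₀ with C(x₀) = 0 and ∇C(x₀) = 0, satisfying C(x) = −(1/2)·∇C(x)ᵀ·v(x)·∇C(x) for all x in that neighborhood. If the Hessian matrix H of C at x₀ is invertible, then H = −v(x₀)^{-1}. -/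
open Matrix

/-- Partial derivative of a scalar function on `Fin m → ℝ` in the `i`-th coordinate
direction. -/
noncomputable def pd17 {m : ℕ} (f : (Fin m → ℝ) → ℝ) (i : Fin m) (x : Fin m → ℝ) : ℝ :=
  fderiv ℝ f x (Pi.single i 1)

section
open Filter Topology

theorem aux_quad {m : ℕ} (M : Matrix (Fin m) (Fin m) ℝ) (hs : Mᵀ = M)
    (h : ∀ u : Fin m → ℝ, u ⬝ᵥ (M *ᵥ u) = 0) : M = 0 := by
  ext i j
  have h1 := h (Pi.single i 1)
  have h2 := h (Pi.single j 1)
  have h3 := h (Pi.single i 1 + Pi.single j 1)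
  have h4 : M j i = M i j := congrFun (congrFun hs i) j
  simp [Matrix.mulVec_add, add_dotProduct, dotProduct_add] at h1 h2 h3 ⊢
  linarith

theorem aux_dir {m : ℕ} (x₀ : Fin m → ℝ)
    (v : (Fin m → ℝ) → Matrix (Fin m) (Fin m) ℝ)
    (hvcont : ∀ i j : Fin m, Continuous fun x => v x i j)
    (U : Set (Fin m → ℝ)) (hUopen : IsOpen U) (hx₀U : x₀ ∈ U)
    (C : (Fin m → ℝ) → ℝ) (hC : ContDiffOn ℝ 2 C U)
    (hC0 : C x₀ = 0) (hgrad0 : fderiv ℝ C x₀ = 0)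
    (heq : ∀ x ∈ U, C x =
      -(1 / 2) * ∑ i : Fin m, ∑ j : Fin m, pd17 C i x * v x i j * pd17 C j x)
    (u : Fin m → ℝ) :
    fderiv ℝ (fderiv ℝ C) x₀ u u = - ∑ i : Fin m, ∑ j : Fin m,
      fderiv ℝ (fderiv ℝ C) x₀ u (Pi.single i 1) * v x₀ i j *
        fderiv ℝ (fderiv ℝ C) x₀ u (Pi.single j 1) := by
  have hCat : ContDiffAt ℝ 2 C x₀ := hC.contDiffAt (hUopen.mem_nhds hx₀U)
  have hD : DifferentiableAt ℝ (fderiv ℝ C) x₀ :=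
    (hCat.fderiv_right (m := 1) (by norm_num)).differentiableAt (by norm_num)
  have hline : ∀ t : ℝ, HasDerivAt (fun t : ℝ => x₀ + t • u) u t := fun t => by
    simpa using ((hasDerivAt_id t).smul_const u).const_add x₀
  have hcont : Continuous (fun t : ℝ => x₀ + t • u) := by fun_prop
  have hG : ∀ w : Fin m → ℝ, Tendsto (fun t : ℝ => fderiv ℝ C (x₀ + t • u) w / t) (𝓝[>] 0)
      (𝓝 (fderiv ℝ (fderiv ℝ C) x₀ u w)) := by
    intro w
    have h0 : HasFDerivAt (fderiv ℝ C) (fderiv ℝ (fderiv ℝ C) x₀) (x₀ + (0:ℝ) • u) := by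
      simpa using hD.hasFDerivAt
    have h1 : HasDerivAt (fun t : ℝ => fderiv ℝ C (x₀ + t • u))
        (fderiv ℝ (fderiv ℝ C) x₀ u) 0 := h0.comp_hasDerivAt (0:ℝ) (hline 0)
    have h2 : HasDerivAt (fun t : ℝ => fderiv ℝ C (x₀ + t • u) w)
        (fderiv ℝ (fderiv ℝ C) x₀ u w) 0 := by
      simpa using h1.clm_apply (hasDerivAt_const (0:ℝ) w)
    have h3 := h2.tendsto_slope_zero_right
    refine h3.congr fun t => ?_
    simp [hgrad0, div_eq_inv_mul]
  have hU : ∀ᶠ t : ℝ in 𝓝 0, x₀ + t • u ∈ U :=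
    hcont.continuousAt.eventually_mem (by simpa using hUopen.mem_nhds hx₀U)
  have hU' : ∀ᶠ t : ℝ in 𝓝[>] 0, x₀ + t • u ∈ U := hU.filter_mono nhdsWithin_le_nhds
  have hpos : ∀ᶠ t : ℝ in 𝓝[>] 0, 0 < t := eventually_mem_nhdsWithin
  have hL : Tendsto (fun t : ℝ => C (x₀ + t • u) / t ^ 2) (𝓝[>] 0)
      (𝓝 (1 / 2 * fderiv ℝ (fderiv ℝ C) x₀ u u)) := by
    refine HasDerivAt.lhopital_zero_nhdsGT
      (f' := fun t => fderiv ℝ C (x₀ + t • u) u) (g' := fun t => 2 * t) ?_ ?_ ?_ ?_ ?_ ?_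
    · filter_upwards [hU'] with t ht
      have : DifferentiableAt ℝ C (x₀ + t • u) :=
        (hC.contDiffAt (hUopen.mem_nhds ht)).differentiableAt (by norm_num)
      exact this.hasFDerivAt.comp_hasDerivAt t (hline t)
    · filter_upwards with t
      simpa using hasDerivAt_pow 2 t
    · filter_upwards [hpos] with t ht
      positivity
    · have h1 : ContinuousAt C (x₀ + (0:ℝ) • u) := by simpa using hCat.continuousAt
      have h2 : ContinuousAt (fun t : ℝ => C (x₀ + t • u)) 0 :=
        ContinuousAt.comp (f := fun t : ℝ => x₀ + t • u) h1 hcont.continuousAt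
      have h3 := h2.tendsto.mono_left (nhdsWithin_le_nhds (s := Set.Ioi 0))
      simpa [hC0] using h3
    · have : ContinuousAt (fun t : ℝ => t ^ 2) 0 := by fun_prop
      have h3 := this.tendsto.mono_left (nhdsWithin_le_nhds (s := Set.Ioi 0))
      simpa using h3
    · refine ((hG u).const_mul (1 / 2)).congr fun t => ?_
      rw [div_mul_div_comm, one_mul]
  have hR : Tendsto (fun t : ℝ => C (x₀ + t • u) / t ^ 2) (𝓝[>] 0)
      (𝓝 (-(1 / 2) * ∑ i : Fin m, ∑ j : Fin m,
      fderiv ℝ (fderiv ℝ C) x₀ u (Pi.single i 1) * v x₀ i j *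
        fderiv ℝ (fderiv ℝ C) x₀ u (Pi.single j 1))) := by
    have hv : ∀ i j, Tendsto (fun t : ℝ => v (x₀ + t • u) i j) (𝓝[>] 0) (𝓝 (v x₀ i j)) := by
      intro i j
      have h2 := ((hvcont i j).comp hcont).tendsto 0
      have h3 := h2.mono_left (nhdsWithin_le_nhds (s := Set.Ioi 0))
      simpa [Function.comp_def] using h3
    have := (tendsto_finsetSum Finset.univ fun i _ => tendsto_finsetSum Finset.univ fun j _ =>
      ((hG (Pi.single i 1)).mul (hv i j)).mul (hG (Pi.single j 1))).const_mul (-(1 / 2) : ℝ)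
    refine this.congr' ?_
    filter_upwards [hU', hpos] with t ht ht0
    rw [heq _ ht, mul_div_assoc, Finset.sum_div]
    congr 1
    refine Finset.sum_congr rfl fun i _ => ?_
    rw [Finset.sum_div]
    refine Finset.sum_congr rfl fun j _ => ?_
    simp only [pd17]
    field_simp
  have := tendsto_nhds_unique hL hR
  linarith

end

/-- The identification in Section 5.1 of the paper of the quadratic term of the leading
coefficient `C_X^{(−1)}` of the irreducible log-likelihood expansion: if `C` is `C²`
near `x₀` with `C(x₀) = 0`, `∇C(x₀) = 0`, satisfies
`C = −(1/2)∇Cᵀ·v·∇C` near `x₀`, `v` is continuous with `v(x₀)` symmetric and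
invertible, and the Hessian `H` of `C` at `x₀` is invertible, then `H = −v(x₀)⁻¹`. -/
theorem hessian_of_leading_coefficient
    (m : ℕ) (hm : 1 ≤ m) (x₀ : Fin m → ℝ)
    (v : (Fin m → ℝ) → Matrix (Fin m) (Fin m) ℝ)
    (hvcont : ∀ i j : Fin m, Continuous fun x => v x i j)
    (hvsymm : (v x₀)ᵀ = v x₀) (hvinv : IsUnit (v x₀))
    (U : Set (Fin m → ℝ)) (hUopen : IsOpen U) (hx₀U : x₀ ∈ U)
    (C : (Fin m → ℝ) → ℝ) (hC : ContDiffOn ℝ 2 C U)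
    (hC0 : C x₀ = 0) (hgrad0 : ∀ i : Fin m, pd17 C i x₀ = 0)
    (heq : ∀ x ∈ U, C x =
      -(1 / 2) * ∑ i : Fin m, ∑ j : Fin m, pd17 C i x * v x i j * pd17 C j x)
    (H : Matrix (Fin m) (Fin m) ℝ)
    (hH : H = Matrix.of fun i j => pd17 (pd17 C j) i x₀)
    (hHinv : IsUnit H) :
    H = -(v x₀)⁻¹ := by
  have hCat : ContDiffAt ℝ 2 C x₀ := hC.contDiffAt (hUopen.mem_nhds hx₀U)
  have hD : DifferentiableAt ℝ (fderiv ℝ C) x₀ :=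
    (hCat.fderiv_right (m := 1) (by norm_num)).differentiableAt (by norm_num)
  have hg : fderiv ℝ C x₀ = 0 := by
    ext u
    rw [pi_eq_sum_univ' u]
    simp only [map_sum, map_smul]
    refine (Finset.sum_eq_zero fun k _ => ?_).trans (by simp)
    have h := hgrad0 k
    unfold pd17 at h
    rw [h, smul_zero]
  have hHe : ∀ i j, H i j = fderiv ℝ (fderiv ℝ C) x₀ (Pi.single i 1) (Pi.single j 1) := by
    intro i j
    have h2 := hD.hasFDerivAt.clm_apply (hasFDerivAt_const (Pi.single j (1:ℝ) : Fin m → ℝ) x₀)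
    rw [hH]
    change fderiv ℝ (fun x => fderiv ℝ C x (Pi.single j 1)) x₀ (Pi.single i 1) = _
    rw [h2.fderiv]
    simp
  have hsym : IsSymmSndFDerivAt ℝ C x₀ := hCat.isSymmSndFDerivAt (by simp)
  have hHs : Hᵀ = H := by
    ext i j
    rw [Matrix.transpose_apply, hHe, hHe]
    exact hsym _ _
  have hu : ∀ (u : Fin m → ℝ) i,
      fderiv ℝ (fderiv ℝ C) x₀ u (Pi.single i 1) = (H *ᵥ u) i := by
    intro u i
    rw [hsym.eq]
    conv_lhs => rw [pi_eq_sum_univ' u]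
    simp only [map_sum, map_smul, Matrix.mulVec, dotProduct, hHe, smul_eq_mul]
    refine Finset.sum_congr rfl fun k _ => ?_
    rw [mul_comm]
  have huu : ∀ u : Fin m → ℝ, fderiv ℝ (fderiv ℝ C) x₀ u u = u ⬝ᵥ (H *ᵥ u) := by
    intro u
    simp only [dotProduct, ← hu]
    conv_lhs => 
      arg 2
      rw [pi_eq_sum_univ' u]
    simp only [map_sum, map_smul, smul_eq_mul]
  have hM : H + H * v x₀ * H = 0 := by
    apply aux_quad
    · simp [Matrix.transpose_mul, hHs, hvsymm, Matrix.mul_assoc]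
    · intro u
      have h1 := aux_dir x₀ v hvcont U hUopen hx₀U C hC hC0 hg heq u
      rw [huu] at h1
      simp only [hu] at h1
      have h2 : u ⬝ᵥ ((H * v x₀ * H) *ᵥ u) = (H *ᵥ u) ⬝ᵥ (v x₀ *ᵥ (H *ᵥ u)) := by
        rw [← Matrix.mulVec_mulVec, ← Matrix.mulVec_mulVec, Matrix.dotProduct_mulVec,
          ← Matrix.mulVec_transpose, hHs]
      rw [Matrix.add_mulVec, dotProduct_add, h2, h1]
      simp only [dotProduct, Matrix.mulVec, Finset.mul_sum, mul_assoc]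
      simp
  have h1 : H * (1 + v x₀ * H) = 0 := by
    rw [mul_add, mul_one, ← mul_assoc]; exact hM
  have h2 : 1 + v x₀ * H = 0 := by
    rwa [hHinv.mul_right_eq_zero] at h1
  have h3 : v x₀ * (-H) = 1 := by
    rw [mul_neg]; exact (eq_neg_of_add_eq_zero_left h2).symm
  rw [Matrix.inv_eq_right_inv h3, neg_neg]
end
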